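/- Let α ∈ (0, 1) be a fixed real number and for each B ≥ 1 set K_B = ⌈α·B⌉. Then in the coupon collector process with B coupons and replacement parameter K_B, the normalized variance Var[T_{B,K_B}]/B converges to (1/α − 1) − ln(1/α) as B → ∞. In particular, the normalized standard deviation σ/√B of the number of cards a single collector must buy depends asymptotically only on the fraction α of purchasable replacement cards, not on the album size B. -/

import Mathlib

open MeasureTheory ProbabilityTheory Filter
open scoped ENNReal

/-- The uniform probability measure on `Fin B`. -/
noncomputable def uniformFin (B : ℕ) : Measure (Fin B) :=
  (B : ℝ≥0∞)⁻¹ • Measure.count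

/-- The stopping time `T_{B,K}`: the least `n` such that at least `B - K` distinct coupons
appear among the first `n` draws. -/
noncomputable def collectTime (B K : ℕ) (ω : ℕ → Fin B) : ℕ :=
  sInf {n : ℕ | B - K ≤ (Finset.image ω (Finset.range n)).card}

/-!
The number of distinct coupons is a pure birth chain: from state `j` it moves to `j + 1` with
probability `q j = 1 - j / B`. Since it never decreases, `T > n` just says that the chain is still
below `B - K` at time `n`, so the moments of `T` are weighted sums over `n` of the one-dimensional
laws of the chain, and these satisfy affine recursions in `n`. This yields
`Var T = ∑ (1 / q j ^ 2 - 1 / q j)` over `j < B - K`, hence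
`Var T / B = B * ∑ 1 / i ^ 2 - ∑ 1 / i` over `K < i ≤ B`. As `K / B → α`, the first sum behaves
like `1 / K - 1 / B` by telescoping and the second like `log (B / K)` because harmonic numbers are
`log n + γ + o(1)`.
-/

section AffineRecursion

variable {a b : ℕ → ℝ} {r A β γ : ℝ}

lemma summable_of_affine_rec (hr : |r| < 1) (hb : Summable b)
    (h : ∀ n, a (n + 1) = r * a n + b n) : Summable a := by
  rw [← summable_abs_iff]
  refine summable_of_sum_range_le (c := (|a 0| + ∑' n, |b n|) / (1 - |r|))
    (fun n ↦ abs_nonneg _) fun N ↦ ?_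
  have partial_sum_le : ∑ n ∈ Finset.range N, |a n| ≤
      |a 0| + |r| * ∑ n ∈ Finset.range N, |a n| + ∑' n, |b n| :=
    calc ∑ n ∈ Finset.range N, |a n|
        ≤ ∑ n ∈ Finset.range (N + 1), |a n| := by simp [Finset.sum_range_succ]
      _ = |a 0| + ∑ n ∈ Finset.range N, |r * a n + b n| := by
        simp only [Finset.sum_range_succ', h, add_comm]
      _ ≤ |a 0| + ∑ n ∈ Finset.range N, (|r| * |a n| + |b n|) := by
        gcongr with n
        exact (abs_add_le _ _).trans_eq (by rw [abs_mul])
      _ = |a 0| + |r| * ∑ n ∈ Finset.range N, |a n| + ∑ n ∈ Finset.range N, |b n| := by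
        rw [Finset.sum_add_distrib, Finset.mul_sum, add_assoc]
      _ ≤ |a 0| + |r| * ∑ n ∈ Finset.range N, |a n| + ∑' n, |b n| := by
        gcongr
        exact hb.abs.sum_le_tsum _ fun n _ ↦ abs_nonneg _
  rw [le_div_iff₀ (sub_pos.2 hr)]
  linarith

lemma hasSum_of_affine_rec (hr : |r| < 1) (hb : HasSum b β)
    (h : ∀ n, a (n + 1) = r * a n + b n) : HasSum a ((a 0 + β) / (1 - r)) := by
  have ha := summable_of_affine_rec hr hb.summable h
  have tsum_eq : ∑' n, a n = a 0 + (r * ∑' n, a n + β) :=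
    calc ∑' n, a n
        = a 0 + ∑' n, a (n + 1) := ha.tsum_eq_zero_add
      _ = a 0 + (r * ∑' n, a n + β) := by
        simp only [h, ((ha.hasSum.mul_left r).add hb).tsum_eq]
  convert ha.hasSum using 1
  rw [div_eq_iff (sub_pos.2 (lt_of_abs_lt hr)).ne']
  linarith

lemma hasSum_natCast_mul_of_affine_rec (hr : |r| < 1) (ha : HasSum a A) (hb : HasSum b β)
    (hnb : HasSum (fun n : ℕ ↦ n * b n) γ) (h : ∀ n, a (n + 1) = r * a n + b n) :
    HasSum (fun n : ℕ ↦ n * a n) ((r * A + γ + β) / (1 - r)) := by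
  convert hasSum_of_affine_rec (a := fun n : ℕ ↦ n * a n) hr
    (((ha.mul_left r).add hnb).add hb) fun n ↦ ?_ using 1
  · simp
  · rw [h]
    push_cast
    ring

end AffineRecursion

section PureBirth

/-- The law of the discrete pure birth chain started at `0` which moves from `j` to `j + 1` with
probability `q j` and otherwise stays put: `pureBirthLaw q n j` is the probability that it is in
state `j` at time `n`. The rates are arbitrary reals, so that the identities below are algebraic. -/
noncomputable def pureBirthLaw (q : ℕ → ℝ) : ℕ → ℕ → ℝ
  | 0, 0 => 1
  | 0, _ + 1 => 0
  | n + 1, 0 => (1 - q 0) * pureBirthLaw q n 0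
  | n + 1, j + 1 => (1 - q (j + 1)) * pureBirthLaw q n (j + 1) + q j * pureBirthLaw q n j

variable {q : ℕ → ℝ} {j : ℕ}

lemma ne_zero_of_abs_one_sub_lt_one {x : ℝ} (hx : |1 - x| < 1) : x ≠ 0 := by
  rintro rfl
  simp at hx

lemma hasSum_pureBirthLaw (hq : ∀ i ≤ j, |1 - q i| < 1) :
    HasSum (fun n ↦ pureBirthLaw q n j) (q j)⁻¹ := by
  induction j with
  | zero =>
    convert hasSum_of_affine_rec (hq 0 le_rfl) hasSum_zero
      (a := fun n ↦ pureBirthLaw q n 0) fun n ↦ ?_ using 1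
    · simp [pureBirthLaw]
    · simp [pureBirthLaw]
  | succ j ih =>
    have hqj := ne_zero_of_abs_one_sub_lt_one (hq j j.le_succ)
    have inflow := (ih fun i hi ↦ hq i (hi.trans j.le_succ)).mul_left (q j)
    convert hasSum_of_affine_rec (hq (j + 1) le_rfl) inflow
      (a := fun n ↦ pureBirthLaw q n (j + 1)) fun n ↦ rfl using 1
    simp [pureBirthLaw, hqj]

lemma hasSum_natCast_mul_pureBirthLaw (hq : ∀ i ≤ j, |1 - q i| < 1) :
    HasSum (fun n : ℕ ↦ n * pureBirthLaw q n j)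
      ((q j)⁻¹ * (∑ i ∈ Finset.range (j + 1), (q i)⁻¹ - 1)) := by
  induction j with
  | zero =>
    have hq0 := ne_zero_of_abs_one_sub_lt_one (hq 0 le_rfl)
    convert hasSum_natCast_mul_of_affine_rec (hq 0 le_rfl) (hasSum_pureBirthLaw hq) hasSum_zero
      (by simp [hasSum_zero]) (a := fun n ↦ pureBirthLaw q n 0) (b := fun _ ↦ 0) (γ := 0)
      fun n ↦ ?_ using 1
    · rw [zero_add, Finset.sum_range_one, sub_sub_cancel, add_zero, add_zero]
      field_simp
    · simp [pureBirthLaw]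
  | succ j ih =>
    have hq' : ∀ i ≤ j, |1 - q i| < 1 := fun i hi ↦ hq i (hi.trans j.le_succ)
    have hqj := ne_zero_of_abs_one_sub_lt_one (hq j j.le_succ)
    have hqj' := ne_zero_of_abs_one_sub_lt_one (hq (j + 1) le_rfl)
    convert hasSum_natCast_mul_of_affine_rec (hq (j + 1) le_rfl) (hasSum_pureBirthLaw hq)
      ((hasSum_pureBirthLaw hq').mul_left (q j))
      (by simpa only [mul_left_comm] using (ih hq').mul_left (q j)) fun n ↦ rfl using 1
    rw [Finset.sum_range_succ _ (j + 1), sub_sub_cancel]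
    field_simp
    ring

lemma sum_mul_sum_range_succ_sub_sq {R : Type*} [CommRing R] (g : ℕ → R) (m : ℕ) :
    ∑ j ∈ Finset.range m, (2 * (g j * (∑ i ∈ Finset.range (j + 1), g i - 1)) + g j)
      - (∑ j ∈ Finset.range m, g j) ^ 2 = ∑ j ∈ Finset.range m, (g j ^ 2 - g j) := by
  induction m with
  | zero => simp
  | succ m ih =>
    simp only [Finset.sum_range_succ _ m] at ih ⊢
    linear_combination ih

end PureBirth

section TailSums

variable {Ω : Type*} [MeasurableSpace Ω] {μ : Measure Ω} {T : Ω → ℕ}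

lemma lintegral_sum_range_eq_tsum (hT : Measurable T) (c : ℕ → ℝ≥0∞) :
    ∫⁻ ω, ∑ n ∈ Finset.range (T ω), c n ∂μ = ∑' n, c n * μ {ω | n < T ω} := by
  have hmeas (n : ℕ) : MeasurableSet {ω | n < T ω} := measurableSet_lt measurable_const hT
  have sum_eq (ω : Ω) : ∑ n ∈ Finset.range (T ω), c n =
      ∑' n, {ω | n < T ω}.indicator (fun _ ↦ c n) ω := by
    rw [tsum_eq_sum (s := Finset.range (T ω)) (by simp +contextual)]
    exact Finset.sum_congr rfl fun n hn ↦ by simp [Finset.mem_range.1 hn]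
  simp only [sum_eq]
  rw [lintegral_tsum fun n ↦ (measurable_const.indicator (hmeas n)).aemeasurable]
  simp only [lintegral_indicator_const (hmeas _)]

lemma integrable_and_integral_sum_range_eq [IsFiniteMeasure μ] (hT : Measurable T) {c : ℕ → ℝ}
    (hc : ∀ n, 0 ≤ c n) {x : ℝ} (hx : HasSum (fun n ↦ c n * μ.real {ω | n < T ω}) x) :
    Integrable (fun ω ↦ ∑ n ∈ Finset.range (T ω), c n) μ ∧
      ∫ ω, ∑ n ∈ Finset.range (T ω), c n ∂μ = x := by
  have hnonneg : ∀ n, 0 ≤ c n * μ.real {ω | n < T ω} := fun n ↦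
    mul_nonneg (hc n) measureReal_nonneg
  have hmeas : AEStronglyMeasurable (fun ω ↦ ∑ n ∈ Finset.range (T ω), c n) μ :=
    ((measurable_from_nat (f := fun N ↦ ∑ n ∈ Finset.range N, c n)).comp hT).aestronglyMeasurable
  have hpos : 0 ≤ᵐ[μ] fun ω ↦ ∑ n ∈ Finset.range (T ω), c n :=
    .of_forall fun ω ↦ Finset.sum_nonneg fun n _ ↦ hc n
  have lintegral_eq :
      ∫⁻ ω, ENNReal.ofReal (∑ n ∈ Finset.range (T ω), c n) ∂μ = ENNReal.ofReal x := by
    simp only [ENNReal.ofReal_sum_of_nonneg fun n _ ↦ hc n]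
    rw [lintegral_sum_range_eq_tsum hT, ← hx.tsum_eq,
      ENNReal.ofReal_tsum_of_nonneg hnonneg hx.summable]
    simp [ENNReal.ofReal_mul (hc _), ofReal_measureReal]
  refine ⟨(lintegral_ofReal_ne_top_iff_integrable hmeas hpos).1
    (lintegral_eq ▸ ENNReal.ofReal_ne_top), ?_⟩
  rw [integral_eq_lintegral_of_nonneg_ae hpos hmeas, lintegral_eq,
    ENNReal.toReal_ofReal (hx.nonneg hnonneg)]

lemma ae_exists_notMem_of_summable_measureReal [IsFiniteMeasure μ] {A : ℕ → Set Ω}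
    (hA : Summable fun n ↦ μ.real (A n)) : ∀ᵐ ω ∂μ, ∃ n, ω ∉ A n := by
  have tsum_ne_top : ∑' n, μ (A n) ≠ ∞ := by
    simpa [ofReal_measureReal] using hA.tsum_ofReal_ne_top
  filter_upwards [ae_eventually_notMem tsum_ne_top] with ω hω using hω.exists

lemma variance_eq_of_hasSum_measureReal_lt [IsProbabilityMeasure μ] (hT : Measurable T) {x y : ℝ}
    (hx : HasSum (fun n ↦ μ.real {ω | n < T ω}) x)
    (hy : HasSum (fun n : ℕ ↦ (2 * n + 1) * μ.real {ω | n < T ω}) y) :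
    variance (fun ω ↦ (T ω : ℝ)) μ = y - x ^ 2 := by
  have sum_odd (N : ℕ) : ∑ n ∈ Finset.range N, (2 * (n : ℝ) + 1) = (N : ℝ) ^ 2 := by
    induction N with
    | zero => simp
    | succ N ih =>
      rw [Finset.sum_range_succ, ih]
      push_cast
      ring
  obtain ⟨first_int, first_eq⟩ :=
    integrable_and_integral_sum_range_eq hT (c := fun _ ↦ 1) (by simp) (by simpa using hx)
  obtain ⟨second_int, second_eq⟩ :=
    integrable_and_integral_sum_range_eq hT (c := fun n ↦ 2 * n + 1) (fun n ↦ by positivity) hy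
  simp only [Finset.sum_const, Finset.card_range, nsmul_eq_mul, mul_one] at first_int first_eq
  simp only [sum_odd] at second_int second_eq
  rw [variance_eq_sub ((memLp_two_iff_integrable_sq first_int.aestronglyMeasurable).2 second_int),
    first_eq]
  simp only [Pi.pow_apply, second_eq]

end TailSums

section HittingTime

-- The second alternative is the junk value `sInf ∅ = 0`.
lemma sInf_setOf_le_apply_le_iff {β : Type*} [Preorder β] {f : ℕ → β} (hf : Monotone f) {b : β}
    {n : ℕ} : sInf {k | b ≤ f k} ≤ n ↔ b ≤ f n ∨ ∀ k, ¬ b ≤ f k := by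
  by_cases hb : ∃ k, b ≤ f k
  · have hle : sInf {k | b ≤ f k} ≤ n ↔ b ≤ f n :=
      ⟨fun h ↦ (show b ≤ f _ from Nat.sInf_mem hb).trans (hf h), fun h ↦ Nat.sInf_le h⟩
    simp [hle, hb]
  · push Not at hb
    simp [hb]

variable {Ω : Type*} [MeasurableSpace Ω] {D : ℕ → Ω → ℕ} {m : ℕ}

lemma measurable_sInf_setOf_le_apply (hD : ∀ n, Measurable (D n))
    (hmono : ∀ ω, Monotone (D · ω)) : Measurable fun ω ↦ sInf {n | m ≤ D n ω} := by
  have hle (n : ℕ) : MeasurableSet {ω | m ≤ D n ω} := measurableSet_le measurable_const (hD n)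
  refine measurable_of_Iic fun n ↦ ?_
  have preimage_eq : (fun ω ↦ sInf {n | m ≤ D n ω}) ⁻¹' Set.Iic n =
      {ω | m ≤ D n ω} ∪ ⋂ k, {ω | m ≤ D k ω}ᶜ := by
    ext ω
    simp [sInf_setOf_le_apply_le_iff (hmono ω)]
  rw [preimage_eq]
  exact (hle n).union (.iInter fun k ↦ (hle k).compl)

variable {μ : Measure Ω} {q : ℕ → ℝ}

lemma measureReal_lt_eq_sum_pureBirthLaw [IsFiniteMeasure μ] (hD : ∀ n, Measurable (D n))
    (hlaw : ∀ n j, μ.real {ω | D n ω = j} = pureBirthLaw q n j) (n m : ℕ) :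
    μ.real {ω | D n ω < m} = ∑ j ∈ Finset.range m, pureBirthLaw q n j := by
  have preimage_eq : {ω | D n ω < m} = D n ⁻¹' Finset.range m := by
    ext ω
    simp
  rw [preimage_eq, ← sum_measureReal_preimage_singleton (Finset.range m)
    fun j _ ↦ hD n (measurableSet_singleton j)]
  exact Finset.sum_congr rfl fun j _ ↦ hlaw n j

theorem variance_sInf_setOf_le_apply_of_pureBirthLaw [IsProbabilityMeasure μ]
    (hD : ∀ n, Measurable (D n)) (hmono : ∀ ω, Monotone (D · ω))
    (hlaw : ∀ n j, μ.real {ω | D n ω = j} = pureBirthLaw q n j)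
    (hq : ∀ j < m, |1 - q j| < 1) :
    variance (fun ω ↦ ((sInf {n | m ≤ D n ω} : ℕ) : ℝ)) μ =
      ∑ j ∈ Finset.range m, ((q j)⁻¹ ^ 2 - (q j)⁻¹) := by
  have hq' : ∀ j ∈ Finset.range m, ∀ i ≤ j, |1 - q i| < 1 := fun j hj i hi ↦
    hq i (hi.trans_lt (Finset.mem_range.1 hj))
  have tail_sum : HasSum (fun n ↦ μ.real {ω | D n ω < m}) (∑ j ∈ Finset.range m, (q j)⁻¹) := by
    simp only [measureReal_lt_eq_sum_pureBirthLaw hD hlaw]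
    exact hasSum_sum fun j hj ↦ hasSum_pureBirthLaw (hq' j hj)
  have weighted_tail_sum : HasSum (fun n : ℕ ↦ (2 * n + 1) * μ.real {ω | D n ω < m})
      (∑ j ∈ Finset.range m,
        (2 * ((q j)⁻¹ * (∑ i ∈ Finset.range (j + 1), (q i)⁻¹ - 1)) + (q j)⁻¹)) := by
    simp only [measureReal_lt_eq_sum_pureBirthLaw hD hlaw, Finset.mul_sum]
    refine hasSum_sum fun j hj ↦ ?_
    simpa only [add_mul, one_mul, mul_assoc] using
      ((hasSum_natCast_mul_pureBirthLaw (hq' j hj)).mul_left 2).add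
        (hasSum_pureBirthLaw (hq' j hj))
  have tail_eq (n : ℕ) : μ.real {ω | n < sInf {n | m ≤ D n ω}} = μ.real {ω | D n ω < m} := by
    refine measureReal_congr ?_
    filter_upwards [ae_exists_notMem_of_summable_measureReal tail_sum.summable] with ω ⟨k, hk⟩
    have hne : ¬ ∀ k, ¬ m ≤ D k ω := fun h ↦ h k (not_lt.1 hk)
    refine propext (?_ : n < sInf {n | m ≤ D n ω} ↔ D n ω < m)
    rw [← not_le, sInf_setOf_le_apply_le_iff (hmono ω), or_iff_left hne, not_le]
  simp only [← tail_eq] at tail_sum weighted_tail_sum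
  rw [variance_eq_of_hasSum_measureReal_lt (measurable_sInf_setOf_le_apply hD hmono) tail_sum
    weighted_tail_sum, sum_mul_sum_range_succ_sub_sq]

end HittingTime

section UniformDraws

variable {Ω : Type*} [MeasurableSpace Ω] {μ : Measure Ω}

lemma measure_mem_and_prodMk_mem_of_indepFun {β ι : Type*} [MeasurableSpace β] [MeasurableSpace ι]
    [IsFiniteMeasure μ] {Z : Ω → β} {Y : Ω → ι} (hZY : IndepFun Z Y μ) (hZ : Measurable Z)
    (hY : Measurable Y) {E : Set β} (hE : MeasurableSet E) {s : Set (β × ι)} (hs : MeasurableSet s)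
    {c : ℝ≥0∞} (hc : ∀ z ∈ E, μ.map Y (Prod.mk z ⁻¹' s) = c) :
    μ {ω | Z ω ∈ E ∧ (Z ω, Y ω) ∈ s} = μ {ω | Z ω ∈ E} * c := by
  have hEs : MeasurableSet (Prod.fst ⁻¹' E ∩ s) := (measurable_fst hE).inter hs
  have section_eq (z : β) :
      μ.map Y (Prod.mk z ⁻¹' (Prod.fst ⁻¹' E ∩ s)) = E.indicator (fun _ ↦ c) z := by
    by_cases hz : z ∈ E
    · simp [Set.preimage_inter, ← Set.preimage_comp, Function.comp_def, hz, hc z hz]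
    · simp [Set.preimage_inter, ← Set.preimage_comp, Function.comp_def, hz]
  calc μ {ω | Z ω ∈ E ∧ (Z ω, Y ω) ∈ s}
      = μ.map (fun ω ↦ (Z ω, Y ω)) (Prod.fst ⁻¹' E ∩ s) :=
        (Measure.map_apply (hZ.prodMk hY) hEs).symm
    _ = ∫⁻ z, E.indicator (fun _ ↦ c) z ∂(μ.map Z) := by
        rw [hZY.map_prod_eq_prod_map_map hZ.aemeasurable hY.aemeasurable,
          Measure.prod_apply hEs]
        simp only [section_eq]
    _ = μ {ω | Z ω ∈ E} * c := by
        rw [lintegral_indicator_const hE, Measure.map_apply hZ hE, mul_comm, Set.preimage]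

variable {ι : Type*} [Fintype ι] [MeasurableSpace ι] [MeasurableSingletonClass ι]
  [IsFiniteMeasure μ] {S : Ω → Finset ι} {Y : Ω → ι}

lemma measureReal_card_eq_and_mem (hSY : IndepFun S Y μ) (hS : Measurable S) (hY : Measurable Y)
    (hUnif : μ.map Y = uniformOn Set.univ) (k : ℕ) :
    μ.real {ω | (S ω).card = k ∧ Y ω ∈ S ω} =
      μ.real {ω | (S ω).card = k} * (k / Fintype.card ι) := by
  have h := measure_mem_and_prodMk_mem_of_indepFun hSY hS hY (E := {A | A.card = k})
    (s := {p | p.2 ∈ p.1}) (c := k / Fintype.card ι) (Set.toFinite _).measurableSet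
    (Set.toFinite _).measurableSet fun A hA ↦ ?_
  · simpa [measureReal_def] using! congrArg ENNReal.toReal h
  · change μ.map Y (A : Set ι) = _
    rw [hUnif, uniformOn_univ, Measure.count_apply_finset, show A.card = k from hA]

lemma measureReal_card_eq_and_notMem (hSY : IndepFun S Y μ) (hS : Measurable S)
    (hY : Measurable Y) (hUnif : μ.map Y = uniformOn Set.univ) (k : ℕ) :
    μ.real {ω | (S ω).card = k ∧ Y ω ∉ S ω} =
      μ.real {ω | (S ω).card = k} * (1 - k / Fintype.card ι) := by
  have hmem : MeasurableSet {ω | Y ω ∈ S ω} :=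
    (hS.prodMk hY) (Set.toFinite {p : Finset ι × ι | p.2 ∈ p.1}).measurableSet
  have split := measureReal_inter_add_sdiff (μ := μ) (s := {ω | (S ω).card = k}) hmem
  have diff_eq : {ω | (S ω).card = k} \ {ω | Y ω ∈ S ω} = {ω | (S ω).card = k ∧ Y ω ∉ S ω} := rfl
  have inter_eq : {ω | (S ω).card = k} ∩ {ω | Y ω ∈ S ω} = {ω | (S ω).card = k ∧ Y ω ∈ S ω} := rfl
  rw [diff_eq, inter_eq, measureReal_card_eq_and_mem hSY hS hY hUnif] at split
  linarith

end UniformDraws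

section CouponCollector

/-- The set of distinct coupons among the first `n` draws `x 0, …, x (n - 1)`. -/
def collected {ι : Type*} [DecidableEq ι] (x : ℕ → ι) (n : ℕ) : Finset ι :=
  Finset.image x (Finset.range n)

section Deterministic

variable {ι : Type*} [DecidableEq ι] (x : ℕ → ι)

lemma collected_succ (n : ℕ) : collected x (n + 1) = insert (x n) (collected x n) := by
  simp [collected, Finset.range_add_one, Finset.image_insert]

lemma monotone_card_collected : Monotone fun n ↦ (collected x n).card := fun _ _ h ↦
  Finset.card_le_card (Finset.image_subset_image (Finset.range_mono h))

lemma collected_eq_image_univ (n : ℕ) :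
    collected x n = Finset.univ.image fun i : Finset.range n ↦ x i := by
  ext y
  simp [collected]

lemma card_collected_succ_eq_succ_iff (n j : ℕ) :
    (collected x (n + 1)).card = j + 1 ↔
      ((collected x n).card = j + 1 ∧ x n ∈ collected x n) ∨
        ((collected x n).card = j ∧ x n ∉ collected x n) := by
  by_cases h : x n ∈ collected x n <;> simp [collected_succ, h]

end Deterministic

section Measurability

variable {ι : Type*} [DecidableEq ι] [MeasurableSpace ι] [MeasurableSingletonClass ι]

lemma measurable_finset_image_univ {κ : Type*} [Fintype κ] :
    Measurable fun f : κ → ι ↦ Finset.univ.image f := by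
  refine measurable_finset_iff.2 fun a ↦ ?_
  simp only [Finset.mem_image, Finset.mem_univ, true_and]
  exact .exists fun i ↦ by fun_prop

variable {Ω : Type*} [MeasurableSpace Ω] {μ : Measure Ω} {X : ℕ → Ω → ι}

lemma measurable_collected (hX : ∀ i, Measurable (X i)) (n : ℕ) :
    Measurable fun ω ↦ collected (X · ω) n := by
  simp only [collected_eq_image_univ]
  exact measurable_finset_image_univ.comp (measurable_pi_lambda _ fun i ↦ hX i)

lemma indepFun_collected (hX : ∀ i, Measurable (X i)) (hIndep : iIndepFun X μ) (n : ℕ) :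
    IndepFun (fun ω ↦ collected (X · ω) n) (X n) μ := by
  simp only [collected_eq_image_univ]
  exact (hIndep.indepFun_finset (Finset.range n) {n} (by simp) hX).comp
    measurable_finset_image_univ
    (measurable_pi_apply (⟨n, Finset.mem_singleton_self n⟩ : ({n} : Finset ℕ)))

end Measurability

lemma uniformFin_eq_uniformOn_univ (B : ℕ) : uniformFin B = uniformOn Set.univ := by
  ext s
  simp [uniformFin, uniformOn_univ, ENNReal.div_eq_inv_mul]

variable {Ω ι : Type*} [MeasurableSpace Ω] {μ : Measure Ω} [Fintype ι] [DecidableEq ι]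
  [MeasurableSpace ι] [MeasurableSingletonClass ι] {X : ℕ → Ω → ι}

lemma measureReal_card_collected_succ (hX : ∀ i, Measurable (X i)) (hIndep : iIndepFun X μ)
    (hUnif : ∀ i, μ.map (X i) = uniformOn Set.univ) (n j : ℕ) :
    μ.real {ω | (collected (X · ω) (n + 1)).card = j + 1} =
      μ.real {ω | (collected (X · ω) n).card = j + 1} * ((j + 1 : ℕ) / Fintype.card ι) +
        μ.real {ω | (collected (X · ω) n).card = j} * (1 - j / Fintype.card ι) := by
  have := hIndep.isProbabilityMeasure
  have hS := measurable_collected hX n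
  have hSX := indepFun_collected hX hIndep n
  rw [← measureReal_card_eq_and_mem hSX hS (hX n) (hUnif n),
    ← measureReal_card_eq_and_notMem hSX hS (hX n) (hUnif n), ← measureReal_union]
  · simp only [card_collected_succ_eq_succ_iff]
    rfl
  · exact Set.disjoint_left.2 fun ω h h' ↦ h'.2 h.2
  · exact (hS.prodMk (hX n))
      (Set.toFinite {p : Finset ι × ι | p.1.card = j ∧ p.2 ∉ p.1}).measurableSet

lemma measureReal_card_collected_eq_pureBirthLaw (hX : ∀ i, Measurable (X i))
    (hIndep : iIndepFun X μ) (hUnif : ∀ i, μ.map (X i) = uniformOn Set.univ) (n j : ℕ) :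
    μ.real {ω | (collected (X · ω) n).card = j} =
      pureBirthLaw (fun j ↦ 1 - j / Fintype.card ι) n j := by
  have := hIndep.isProbabilityMeasure
  induction n generalizing j with
  | zero => cases j <;> simp [collected, pureBirthLaw]
  | succ n ih =>
    cases j with
    | zero => simp [collected_succ, pureBirthLaw]
    | succ j =>
      rw [measureReal_card_collected_succ hX hIndep hUnif, ih, ih, pureBirthLaw]
      ring

theorem variance_sInf_setOf_le_card_collected (hX : ∀ i, Measurable (X i))
    (hIndep : iIndepFun X μ) (hUnif : ∀ i, μ.map (X i) = uniformOn Set.univ) {m : ℕ}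
    (hm : m ≤ Fintype.card ι) :
    variance (fun ω ↦ ((sInf {n | m ≤ (collected (X · ω) n).card} : ℕ) : ℝ)) μ =
      ∑ j ∈ Finset.range m,
        ((1 - (j : ℝ) / Fintype.card ι)⁻¹ ^ 2 - (1 - (j : ℝ) / Fintype.card ι)⁻¹) := by
  have := hIndep.isProbabilityMeasure
  refine variance_sInf_setOf_le_apply_of_pureBirthLaw
    (fun n ↦ (measurable_of_countable Finset.card).comp (measurable_collected hX n))
    (fun ω ↦ monotone_card_collected _)
    (measureReal_card_collected_eq_pureBirthLaw hX hIndep hUnif) fun j hj ↦ ?_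
  have hj' : (j : ℝ) < Fintype.card ι := by exact_mod_cast hj.trans_le hm
  rw [sub_sub_cancel, abs_of_nonneg (by positivity)]
  exact (div_lt_one (j.cast_nonneg.trans_lt hj')).2 hj'

theorem variance_collectTime {B : ℕ} (K : ℕ) {X : ℕ → Ω → Fin B} (hX : ∀ i, Measurable (X i))
    (hIndep : iIndepFun X μ) (hUnif : ∀ i, μ.map (X i) = uniformFin B) :
    variance (fun ω ↦ (collectTime B K (X · ω) : ℝ)) μ =
      ∑ i ∈ Finset.Ioc K B, (((B : ℝ) / i) ^ 2 - B / i) := by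
  simp only [uniformFin_eq_uniformOn_univ] at hUnif
  refine (variance_sInf_setOf_le_card_collected hX hIndep hUnif (m := B - K) (by simp)).trans ?_
  refine Finset.sum_nbij' (B - ·) (B - ·) ?_ ?_ ?_ ?_ fun j hj ↦ ?_
  any_goals simp only [Finset.mem_range, Finset.mem_Ioc]; lia
  have hjB : j < B := by grind
  have hB : (B : ℝ) ≠ 0 := Nat.cast_ne_zero.2 (by lia)
  rw [Fintype.card_fin, one_sub_div hB, inv_div, Nat.cast_sub hjB.le]

end CouponCollector

section Asymptotics

lemma sum_Ioc_inv_eq_harmonic_sub {k n : ℕ} (h : k ≤ n) :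
    ∑ i ∈ Finset.Ioc k n, (i : ℝ)⁻¹ = harmonic n - harmonic k := by
  induction n, h using Nat.le_induction with
  | base => simp
  | succ n hn ih =>
    rw [Finset.sum_Ioc_succ_top (by lia), ih, harmonic_succ]
    push_cast
    ring

lemma inv_sub_inv_le_sum_Ioc_inv_sq {k n : ℕ} (h : k ≤ n) :
    ((k : ℝ) + 1)⁻¹ - ((n : ℝ) + 1)⁻¹ ≤ ∑ i ∈ Finset.Ioc k n, ((i : ℝ) ^ 2)⁻¹ := by
  induction n, h using Nat.le_induction with
  | base => simp
  | succ n hn ih =>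
    rw [Finset.sum_Ioc_succ_top (by lia)]
    have step : ((n : ℝ) + 1)⁻¹ - ((n : ℝ) + 1 + 1)⁻¹ ≤ (((n : ℝ) + 1) ^ 2)⁻¹ := by
      rw [inv_sub_inv (by positivity) (by positivity), ← one_div]
      gcongr
      · linarith
      · nlinarith
    push_cast
    linarith

variable {ι : Type*} {l : Filter ι} {k n : ι → ℕ} {α : ℝ}

lemma tendsto_sum_Ioc_inv (hα : 0 < α) (hn : Tendsto n l atTop)
    (hk : Tendsto (fun i ↦ (k i : ℝ) / n i) l (nhds α)) (hkn : ∀ᶠ i in l, k i ≤ n i) :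
    Tendsto (fun i ↦ ∑ j ∈ Finset.Ioc (k i) (n i), (j : ℝ)⁻¹) l (nhds (Real.log (1 / α))) := by
  have hn0 := hn.eventually_ne_atTop 0
  have hk_top : Tendsto k l atTop := by
    refine tendsto_natCast_atTop_iff.1 ((hk.pos_mul_atTop hα
      (tendsto_natCast_atTop_iff.2 hn)).congr' ?_)
    filter_upwards [hn0] with i hi
    exact div_mul_cancel₀ _ (Nat.cast_ne_zero.2 hi)
  have euler := ((Real.tendsto_harmonic_sub_log.comp hn).sub
    (Real.tendsto_harmonic_sub_log.comp hk_top)).sub (hk.log hα.ne')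
  rw [sub_self, zero_sub, ← Real.log_inv, ← one_div] at euler
  refine euler.congr' ?_
  filter_upwards [hkn, hn0, hk_top.eventually_ne_atTop 0] with i hi hni hki
  rw [sum_Ioc_inv_eq_harmonic_sub hi,
    Real.log_div (Nat.cast_ne_zero.2 hki) (Nat.cast_ne_zero.2 hni)]
  simp only [Function.comp_apply]
  ring

lemma tendsto_mul_sum_Ioc_inv_sq (hα : 0 < α) (hn : Tendsto n l atTop)
    (hk : Tendsto (fun i ↦ (k i : ℝ) / n i) l (nhds α)) (hkn : ∀ᶠ i in l, k i ≤ n i) :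
    Tendsto (fun i ↦ (n i : ℝ) * ∑ j ∈ Finset.Ioc (k i) (n i), ((j : ℝ) ^ 2)⁻¹) l
      (nhds (1 / α - 1)) := by
  have hn_inv : Tendsto (fun i ↦ (n i : ℝ)⁻¹) l (nhds 0) :=
    (tendsto_natCast_atTop_iff.2 hn).inv_tendsto_atTop
  have lower : Tendsto (fun i ↦ ((k i : ℝ) / n i + (n i : ℝ)⁻¹)⁻¹ - (1 + (n i : ℝ)⁻¹)⁻¹) l
      (nhds (1 / α - 1)) := by
    simpa using ((hk.add hn_inv).inv₀ (by simpa using hα.ne')).sub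
      ((hn_inv.const_add 1).inv₀ (by simp))
  have upper : Tendsto (fun i ↦ ((k i : ℝ) / n i)⁻¹ - 1) l (nhds (1 / α - 1)) := by
    simpa using (hk.inv₀ hα.ne').sub_const 1
  have hn_pos : ∀ᶠ i in l, (0 : ℝ) < n i := by
    filter_upwards [hn.eventually_gt_atTop 0] with i hi using Nat.cast_pos.2 hi
  refine tendsto_of_tendsto_of_tendsto_of_le_of_le' lower upper ?_ ?_
  · filter_upwards [hkn, hn_pos] with i hi hni
    refine le_of_eq_of_le ?_ (mul_le_mul_of_nonneg_left (inv_sub_inv_le_sum_Ioc_inv_sq hi) hni.le)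
    field_simp
  · filter_upwards [hkn, hn_pos, hk.eventually_const_lt hα] with i hi hni hki
    have hki : k i ≠ 0 := by
      rintro h
      simp [h] at hki
    refine (mul_le_mul_of_nonneg_left (sum_Ioc_inv_sq_le_sub hki hi) hni.le).trans_eq ?_
    field_simp

end Asymptotics

theorem normalized_variance_tendsto_of_replacement_fraction_general
    {Ω : ℕ → Type*} [∀ B, MeasurableSpace (Ω B)] (μ : ∀ B, Measure (Ω B))
    (X : ∀ B, ℕ → Ω B → Fin B) (K : ℕ → ℕ) (α : ℝ) (hα : 0 < α)
    (hK : Tendsto (fun B ↦ (K B : ℝ) / B) atTop (nhds α)) (hKB : ∀ᶠ B in atTop, K B ≤ B)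
    (hX : ∀ᶠ B in atTop, ∀ i, Measurable (X B i))
    (hIndep : ∀ᶠ B in atTop, iIndepFun (X B) (μ B))
    (hUnif : ∀ᶠ B in atTop, ∀ i, (μ B).map (X B i) = uniformFin B) :
    Tendsto (fun B : ℕ ↦ variance (fun ω ↦ (collectTime B (K B) (X B · ω) : ℝ)) (μ B) / B)
      atTop (nhds ((1 / α - 1) - Real.log (1 / α))) := by
  refine ((tendsto_mul_sum_Ioc_inv_sq hα tendsto_id hK hKB).sub
    (tendsto_sum_Ioc_inv hα tendsto_id hK hKB)).congr' ?_
  filter_upwards [hX, hIndep, hUnif, eventually_ne_atTop 0] with B hX hIndep hUnif hB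
  have hB' : (B : ℝ) ≠ 0 := Nat.cast_ne_zero.2 hB
  rw [variance_collectTime (K B) hX hIndep hUnif, Finset.sum_div, id, Finset.mul_sum,
    ← Finset.sum_sub_distrib]
  refine Finset.sum_congr rfl fun i _ ↦ ?_
  field_simp

/-- **The normalized variance depends asymptotically only on the replacement fraction.**
Fix `α ∈ (0,1)` and set `K_B = ⌈α B⌉`. For any family `μ B` of probability measures on
`ℕ → Fin B` (for `B ≥ 1`) under which the draws are independent and uniform on the `B` coupons,
the normalized variance `Var[T_{B,K_B}]/B` converges to `(1/α - 1) - ln(1/α)` as `B → ∞`. -/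
theorem normalized_variance_tendsto_of_replacement_fraction
    (α : ℝ) (hα : α ∈ Set.Ioo (0 : ℝ) 1)
    (μ : ∀ B : ℕ, Measure (ℕ → Fin B))
    (hprob : ∀ B : ℕ, 1 ≤ B → IsProbabilityMeasure (μ B))
    (hIndep : ∀ B : ℕ, 1 ≤ B →
      iIndepFun (fun i (ω : ℕ → Fin B) => ω i) (μ B))
    (hUnif : ∀ B : ℕ, 1 ≤ B → ∀ i : ℕ, (μ B).map (fun ω => ω i) = uniformFin B) :
    Tendsto
      (fun B : ℕ => variance (fun ω => (collectTime B ⌈α * B⌉₊ ω : ℝ)) (μ B) / B)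
      atTop (nhds ((1 / α - 1) - Real.log (1 / α))) := by
  obtain ⟨hα_pos, hα_lt⟩ := hα
  exact normalized_variance_tendsto_of_replacement_fraction_general μ (fun B i ω ↦ ω i) _ α hα_pos
    ((tendsto_nat_ceil_mul_div_atTop hα_pos.le).comp tendsto_natCast_atTop_atTop)
    (.of_forall fun B ↦ Nat.ceil_le.2 (mul_le_of_le_one_left B.cast_nonneg hα_lt.le))
    (.of_forall fun B ↦ measurable_pi_apply) (eventually_atTop.2 ⟨1, hIndep⟩)
    (eventually_atTop.2 ⟨1, hUnif⟩)
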